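/- Let T ≥ 1 and λ ∈ (0, 1]. Then the estimator that shrinks each sample average toward the average of the sample averages, Ŷ_t = λ ȳ_t + ((1−λ)/T) Σ_{r=1}^T ȳ_r, satisfies Ŷ = (I + ((1−λ)/(λT)) L(𝟙𝟙ᵀ))⁻¹ ȳ, where 𝟙 is the all-ones vector in ℝ^T and L(𝟙𝟙ᵀ) = T I − 𝟙𝟙ᵀ is the graph Laplacian of the all-ones matrix; in particular this estimator is of MTA form. -/

import Mathlib

open Matrix BigOperators

/-- Graph Laplacian `L(A) = D - A` where `D` is the diagonal matrix of row sums. -/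
noncomputable def graphLaplacian {T : ℕ} (A : Matrix (Fin T) (Fin T) ℝ) :
    Matrix (Fin T) (Fin T) ℝ :=
  Matrix.diagonal (fun t => ∑ s, A t s) - A

/-!
With `P = 𝟙𝟙ᵀ/T` the orthogonal projection onto the constant vectors, `L(𝟙𝟙ᵀ) = T(I - P)`, so the
matrix to invert is `I + ((1-λ)/λ)(I - P) = P + λ⁻¹(I - P)`. It scales the two complementary
summands by `1` and `λ⁻¹`, hence its inverse is `P + λ(I - P) = λI + (1-λ)P`, which shrinks each
entry of a vector toward the mean of the entries.
-/

section Idempotent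

variable {R : Type*} [Ring R] {p : R}

theorem add_smul_one_sub_mul_add_smul_one_sub {S : Type*} [CommSemiring S] [Algebra S R]
    (hp : IsIdempotentElem p) (a b : S) :
    (p + a • (1 - p)) * (p + b • (1 - p)) = p + (a * b) • (1 - p) := by
  simp only [add_mul, mul_add, smul_mul_assoc, mul_smul_comm, hp.eq, hp.mul_one_sub_self,
    hp.one_sub_mul_self, hp.one_sub.eq, smul_zero, add_zero, zero_add, smul_comm b a, mul_smul]

theorem one_add_smul_one_sub_mul_eq_one {K : Type*} [Field K] [Algebra K R]
    (hp : IsIdempotentElem p) {lam : K} (hlam : lam ≠ 0) :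
    (1 + ((1 - lam) / lam) • (1 - p)) * (lam • 1 + (1 - lam) • p) = 1 := by
  have hleft : 1 + ((1 - lam) / lam) • (1 - p) = p + lam⁻¹ • (1 - p) := by
    match_scalars <;> field_simp <;> ring
  have hright : lam • 1 + (1 - lam) • p = p + lam • (1 - p) := by
    module
  rw [hleft, hright, add_smul_one_sub_mul_add_smul_one_sub hp, inv_mul_cancel₀ hlam, one_smul,
    add_sub_cancel]

end Idempotent

section Averaging

theorem vecMulVec_ones_mul_self {ι R : Type*} [Fintype ι] [Semiring R] :
    (vecMulVec (fun _ => 1) (fun _ => 1) * vecMulVec (fun _ => 1) (fun _ => 1) : Matrix ι ι R) =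
      (Fintype.card ι : R) • vecMulVec (fun _ => 1) (fun _ => 1) := by
  ext i j
  simp [mul_apply, vecMulVec_apply]

variable (ι K : Type*) [Fintype ι] [Field K]

/-- The averaging matrix `𝟙𝟙ᵀ / |ι|`, which replaces every entry of a vector by the mean of its
entries. It is zero when `|ι|` vanishes in `K`. -/
def averagingMatrix : Matrix ι ι K :=
  (Fintype.card ι : K)⁻¹ • vecMulVec (fun _ => 1) (fun _ => 1)

variable {ι K}

theorem averagingMatrix_mulVec_apply (v : ι → K) (t : ι) :
    (averagingMatrix ι K *ᵥ v) t = (∑ r, v r) / Fintype.card ι := by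
  simp [averagingMatrix, smul_mulVec, vecMulVec_mulVec, dotProduct, div_eq_inv_mul]

theorem isIdempotentElem_averagingMatrix : IsIdempotentElem (averagingMatrix ι K) := by
  have hinv : (Fintype.card ι : K)⁻¹ * (Fintype.card ι : K)⁻¹ * Fintype.card ι =
      (Fintype.card ι : K)⁻¹ := by
    simpa only [inv_inv] using mul_self_mul_inv (Fintype.card ι : K)⁻¹
  rw [IsIdempotentElem, averagingMatrix, smul_mul_smul_comm, vecMulVec_ones_mul_self,
    smul_smul, hinv]

variable [DecidableEq ι]

theorem card_smul_one_sub_averagingMatrix (hcard : (Fintype.card ι : K) ≠ 0) :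
    (Fintype.card ι : K) • (1 - averagingMatrix ι K) =
      (Fintype.card ι : K) • 1 - vecMulVec (fun _ => 1) (fun _ => 1) := by
  rw [averagingMatrix, smul_sub, smul_inv_smul₀ hcard]

theorem inv_one_add_smul_card_smul_one_sub_ones (hcard : (Fintype.card ι : K) ≠ 0) {lam : K}
    (hlam : lam ≠ 0) :
    (1 + ((1 - lam) / (lam * Fintype.card ι)) •
        ((Fintype.card ι : K) • (1 : Matrix ι ι K) - vecMulVec (fun _ => 1) (fun _ => 1)))⁻¹ =
      lam • 1 + (1 - lam) • averagingMatrix ι K := by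
  have hscale : (1 - lam) / (lam * Fintype.card ι) * Fintype.card ι = (1 - lam) / lam := by
    field_simp
  rw [← card_smul_one_sub_averagingMatrix hcard, smul_smul, hscale]
  exact inv_eq_right_inv (one_add_smul_one_sub_mul_eq_one isIdempotentElem_averagingMatrix hlam)

theorem shrinkage_to_average_of_means_is_mta_form_general (hcard : (Fintype.card ι : K) ≠ 0)
    {lam : K} (hlam : lam ≠ 0) (ybar Yhat : ι → K)
    (hYhat : Yhat = fun t => lam * ybar t + (1 - lam) / Fintype.card ι * ∑ r, ybar r) :
    Yhat = (1 + ((1 - lam) / (lam * Fintype.card ι)) •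
      ((Fintype.card ι : K) • (1 : Matrix ι ι K) -
        vecMulVec (fun _ => 1) (fun _ => 1)))⁻¹ *ᵥ ybar := by
  rw [hYhat, inv_one_add_smul_card_smul_one_sub_ones hcard hlam, add_mulVec, smul_mulVec,
    smul_mulVec, one_mulVec]
  ext t
  simp only [Pi.add_apply, Pi.smul_apply, smul_eq_mul, averagingMatrix_mulVec_apply]
  rw [div_mul_eq_mul_div, mul_div_assoc]

end Averaging

theorem graphLaplacian_ones (T : ℕ) :
    graphLaplacian (vecMulVec (fun _ : Fin T => (1 : ℝ)) (fun _ => 1)) =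
      (T : ℝ) • 1 - vecMulVec (fun _ => 1) (fun _ => 1) := by
  simp [graphLaplacian, vecMulVec_apply, smul_one_eq_diagonal]

/-- Shrinkage toward the average of the sample averages is of MTA form:
`Ŷ_t = λ ȳ_t + ((1−λ)/T) ∑ r, ȳ_r` satisfies
`Ŷ = (I + ((1−λ)/(λT)) L(𝟙𝟙ᵀ))⁻¹ ȳ`. -/
theorem shrinkage_to_average_of_means_is_mta_form (T : ℕ) (hT : 1 ≤ T)
    (lam : ℝ) (hlam0 : 0 < lam) (hlam1 : lam ≤ 1)
    (ybar : Fin T → ℝ)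
    (Yhat : Fin T → ℝ)
    (hYhat : Yhat = fun t =>
      lam * ybar t + ((1 - lam) / (T : ℝ)) * ∑ r, ybar r) :
    Yhat = ((1 + ((1 - lam) / (lam * (T : ℝ))) •
      graphLaplacian (Matrix.vecMulVec (fun _ => (1 : ℝ)) (fun _ => (1 : ℝ))))⁻¹).mulVec
        ybar := by
  have hcard : (Fintype.card (Fin T) : ℝ) ≠ 0 := by simpa using Nat.one_le_iff_ne_zero.mp hT
  simpa only [graphLaplacian_ones, Fintype.card_fin] using
    shrinkage_to_average_of_means_is_mta_form_general hcard hlam0.ne' ybar Yhat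
      (by simpa only [Fintype.card_fin] using hYhat)
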